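/- For every positive integer n, the number of pairs (x, y) ∈ ℤ² with x² + xy + y² = n and x ≡ y ≡ 1 (mod 3) equals 3 ∑_{d|(n/3)} χ₋₃(d) − 3 ∑_{d|(n/9)} χ₋₃(d). -/

import Mathlib

open Finset

/-- The Kronecker symbol `(-3/d)` for positive `d`. -/
def chiM3 (d : ℕ) : ℤ := if d % 3 = 1 then 1 else if d % 3 = 2 then -1 else 0

/-- `Sdiv χ n k = ∑_{d ∣ n/k} χ d`, interpreted as `0` when `k` does not divide `n`. -/
def Sdiv (χ : ℕ → ℤ) (n k : ℕ) : ℤ := if k ∣ n then ∑ d ∈ (n / k).divisors, χ d else 0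

/-- The norm form of the Eisenstein integers in the basis `1, ζ₆`. -/
def eisNorm (α : ℤ × ℤ) : ℤ := α.1 ^ 2 + α.1 * α.2 + α.2 ^ 2

/-- Multiplication of Eisenstein integers in the basis `1, ζ₆`. -/
def eisMul (β γ : ℤ × ℤ) : ℤ × ℤ :=
  (β.1 * γ.1 - β.2 * γ.2, β.1 * γ.2 + β.2 * γ.1 + β.2 * γ.2)

/-- The representations of `n` by the form `x² + xy + y²`. -/
def eisReps (n : ℕ) : Set (ℤ × ℤ) := {α | eisNorm α = n}

theorem eisNorm_eisMul (β γ : ℤ × ℤ) : eisNorm (eisMul β γ) = eisNorm β * eisNorm γ := by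
  simp only [eisNorm, eisMul]
  ring

theorem eisMul_injective {β : ℤ × ℤ} (hβ : eisNorm β ≠ 0) : Function.Injective (eisMul β) := by
  rintro ⟨c, d⟩ ⟨c', d'⟩ h
  simp only [eisMul, Prod.mk.injEq] at h
  obtain ⟨h₁, h₂⟩ := h
  refine Prod.ext (mul_left_cancel₀ hβ ?_) (mul_left_cancel₀ hβ ?_)
  · simp only [eisNorm]
    linear_combination (β.1 + β.2) * h₁ + β.2 * h₂
  · simp only [eisNorm]
    linear_combination β.1 * h₂ - β.2 * h₁

theorem ncard_image_eisMul {β : ℤ × ℤ} (hβ : eisNorm β ≠ 0) (s : Set (ℤ × ℤ)) :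
    (eisMul β '' s).ncard = s.ncard :=
  Set.ncard_image_of_injective s (eisMul_injective hβ)

theorem finite_eisReps (n : ℕ) : (eisReps n).Finite := by
  refine ((Set.finite_Icc (-(2 * n) : ℤ) (2 * n)).prod
    (Set.finite_Icc (-(2 * n) : ℤ) (2 * n))).subset ?_
  rintro ⟨x, y⟩ h
  simp only [eisReps, eisNorm, Set.mem_ofPred_eq] at h
  simp only [Set.mem_prod, Set.mem_Icc]
  have hn : (0 : ℤ) ≤ n := by positivity
  have hn' : (n : ℤ) ≤ n ^ 2 := by exact_mod_cast Nat.le_self_pow two_ne_zero n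
  have hx : x ^ 2 ≤ (2 * n : ℤ) ^ 2 := by nlinarith [sq_nonneg (x + 2 * y)]
  have hy : y ^ 2 ≤ (2 * n : ℤ) ^ 2 := by nlinarith [sq_nonneg (2 * x + y)]
  exact ⟨abs_le.1 (abs_le_of_sq_le_sq hx (by positivity)),
    abs_le.1 (abs_le_of_sq_le_sq hy (by positivity))⟩

/-- An Eisenstein integer `α` is a multiple of `β` as soon as `N(β)` divides `β̄ α`. -/
theorem mem_image_eisMul {β α : ℤ × ℤ} {q n m : ℕ} (hq : 0 < q) (hβ : eisNorm β = q)
    (hα : α ∈ eisReps m) (hm : m = q * n) (h₁ : (q : ℤ) ∣ (β.1 + β.2) * α.1 + β.2 * α.2)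
    (h₂ : (q : ℤ) ∣ β.1 * α.2 - β.2 * α.1) : α ∈ eisMul β '' eisReps n := by
  obtain ⟨c, hc⟩ := h₁
  obtain ⟨d, hd⟩ := h₂
  have hq' : (q : ℤ) ≠ 0 := by positivity
  have key : eisMul β (c, d) = α := by
    simp only [eisNorm] at hβ
    refine Prod.ext (mul_left_cancel₀ hq' ?_) (mul_left_cancel₀ hq' ?_)
    · simp only [eisMul]
      linear_combination α.1 * hβ - β.1 * hc + β.2 * hd
    · simp only [eisMul]
      linear_combination α.2 * hβ - β.2 * hc - (β.1 + β.2) * hd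
  refine ⟨(c, d), ?_, key⟩
  have h : eisNorm α = m := hα
  rw [← key, eisNorm_eisMul, hβ, hm] at h
  push_cast at h
  exact mul_left_cancel₀ hq' h

theorem image_eisMul_subset {β : ℤ × ℤ} {q n m : ℕ} (hβ : eisNorm β = q) (hm : m = q * n) :
    eisMul β '' eisReps n ⊆ eisReps m := by
  rintro _ ⟨γ, hγ, rfl⟩
  have hγ' : eisNorm γ = n := hγ
  simp [eisReps, eisNorm_eisMul, hβ, hγ', hm]

/-- The representations of `n` with both coordinates divisible by `p` are those of `n / p²`. -/
theorem ncard_eisReps_dvd {p n : ℕ} (hp : 0 < p) :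
    {α ∈ eisReps n | (p : ℤ) ∣ α.1 ∧ (p : ℤ) ∣ α.2}.ncard =
      if p ^ 2 ∣ n then (eisReps (n / p ^ 2)).ncard else 0 := by
  have hN : eisNorm ((p : ℤ), 0) = (p ^ 2 : ℕ) := by simp [eisNorm]
  split_ifs with h
  · obtain ⟨k, rfl⟩ := h
    rw [Nat.mul_div_cancel_left k (by positivity),
      ← ncard_image_eisMul (β := ((p : ℤ), 0)) (by rw [hN]; positivity) (eisReps k)]
    congr 1
    refine Set.ext fun α => ?_
    constructor
    · rintro ⟨hα, ⟨c, hc⟩, d, hd⟩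
      refine mem_image_eisMul (by positivity) hN hα rfl ⟨c, ?_⟩ ⟨d, ?_⟩
      · simp only [hc]; push_cast; ring
      · simp only [hd]; push_cast; ring
    · intro hα
      refine ⟨image_eisMul_subset hN rfl hα, ?_⟩
      obtain ⟨γ, -, rfl⟩ := hα
      simp [eisMul]
  · rw [Set.ncard_eq_zero ((finite_eisReps n).subset (Set.sep_subset _ _)),
      Set.eq_empty_iff_forall_notMem]
    rintro ⟨x, y⟩ ⟨hα, ⟨c, hc⟩, d, hd⟩
    simp only at hc hd
    apply h
    have hα' : x ^ 2 + x * y + y ^ 2 = n := hα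
    zify
    exact ⟨c ^ 2 + c * d + d ^ 2, by rw [← hα', hc, hd]; ring⟩

theorem ncard_eisReps_three_mul (n : ℕ) : (eisReps (3 * n)).ncard = (eisReps n).ncard := by
  have hN : eisNorm (1, 1) = (3 : ℕ) := by simp [eisNorm]
  rw [← ncard_image_eisMul (β := (1, 1)) (by rw [hN]; norm_num) (eisReps n)]
  congr 1
  refine Set.Subset.antisymm ?_ (image_eisMul_subset hN rfl)
  rintro ⟨x, y⟩ hα
  have hα' : x ^ 2 + x * y + y ^ 2 = (3 * n : ℕ) := hα
  push_cast at hα'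
  have h : (3 : ℤ) ∣ x - y :=
    Int.prime_three.dvd_of_dvd_pow (n := 2) ⟨n - x * y, by linear_combination hα'⟩
  refine mem_image_eisMul (by norm_num) hN hα rfl ?_ ?_ <;> push_cast <;> omega

/-- A prime `p ≡ 2 (mod 3)` dividing `x² + xy + y²` divides `y`. -/
theorem dvd_of_dvd_eisNorm {p : ℕ} (hp : p.Prime) (h2 : p % 3 = 2) {x y : ℤ}
    (h : (p : ℤ) ∣ x ^ 2 + x * y + y ^ 2) : (p : ℤ) ∣ y := by
  have := Fact.mk hp
  by_contra hy
  have hy' : (y : ZMod p) ≠ 0 := by rwa [Ne, ZMod.intCast_zmod_eq_zero_iff_dvd]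
  have h' : (x : ZMod p) ^ 2 + x * y + y ^ 2 = 0 := by
    exact_mod_cast (ZMod.intCast_zmod_eq_zero_iff_dvd _ p).2 h
  have hcube : ((x : ZMod p) / y) ^ 3 = 1 := by
    field_simp
    linear_combination ((x : ZMod p) - y) * h'
  have hz : (x : ZMod p) / y ≠ 0 := by
    intro h0
    simp [h0] at hcube
  have hone : (x : ZMod p) / y = 1 := by
    have hd₁ := orderOf_dvd_of_pow_eq_one hcube
    have hd₂ := orderOf_dvd_of_pow_eq_one (ZMod.pow_card_sub_one_eq_one hz)
    have hcop : Nat.Coprime 3 (p - 1) :=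
      (Nat.Prime.coprime_iff_not_dvd Nat.prime_three).2 (by have := hp.two_le; omega)
    exact orderOf_eq_one_iff.1 (Nat.dvd_one.1 (hcop ▸ Nat.dvd_gcd hd₁ hd₂))
  rw [div_eq_one_iff_eq hy'] at hone
  rw [hone] at h'
  have h3 : ((3 : ℕ) : ZMod p) * (y : ZMod p) ^ 2 = 0 := by
    push_cast
    linear_combination h'
  rcases mul_eq_zero.1 h3 with h3 | h3
  · rw [ZMod.natCast_eq_zero_iff, Nat.prime_dvd_prime_iff_eq hp Nat.prime_three] at h3
    omega
  · exact hy' (pow_eq_zero_iff two_ne_zero |>.1 h3)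

theorem sq_dvd_mul_self_iff {p : ℕ} (hp : 0 < p) (n : ℕ) : p ^ 2 ∣ p * n ↔ p ∣ n := by
  rw [sq, Nat.mul_dvd_mul_iff_left hp]

theorem mul_div_sq {p : ℕ} (hp : 0 < p) (n : ℕ) : p * n / p ^ 2 = n / p := by
  rw [sq, Nat.mul_div_mul_left _ _ hp]

theorem ncard_eisReps_inert_mul {p : ℕ} (hp : p.Prime) (h2 : p % 3 = 2) (n : ℕ) :
    (eisReps (p * n)).ncard = if p ∣ n then (eisReps (n / p)).ncard else 0 := by
  have := ncard_eisReps_dvd (p := p) (n := p * n) hp.pos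
  simp only [sq_dvd_mul_self_iff hp.pos, mul_div_sq hp.pos] at this
  rw [← this]
  congr 1
  refine Set.Subset.antisymm ?_ (Set.sep_subset _ _)
  rintro ⟨x, y⟩ hα
  have hα' : x ^ 2 + x * y + y ^ 2 = (p * n : ℕ) := hα
  push_cast at hα'
  exact ⟨hα, dvd_of_dvd_eisNorm hp h2 (x := y) ⟨n, by linear_combination hα'⟩,
    dvd_of_dvd_eisNorm hp h2 (x := x) ⟨n, by linear_combination hα'⟩⟩

theorem exists_sq_add_self_add_one_eq_zero {p : ℕ} [Fact p.Prime] (h1 : p % 3 = 1) :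
    ∃ k : ZMod p, k ^ 2 + k + 1 = 0 := by
  have := Fact.mk Nat.prime_three
  have hcard : 3 ∣ Fintype.card (ZMod p)ˣ := by
    rw [ZMod.card_units]
    omega
  obtain ⟨u, hu⟩ := exists_prime_orderOf_dvd_card 3 hcard
  have hu3 : (u : ZMod p) ^ 3 = 1 := by
    have := pow_orderOf_eq_one u
    rw [hu] at this
    rw [← Units.val_pow_eq_pow_val, this, Units.val_one]
  have hu1 : (u : ZMod p) - 1 ≠ 0 := by
    intro h
    have : u = 1 := Units.ext (by simpa using sub_eq_zero.1 h)
    simp [this] at hu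
  exact ⟨u, mul_left_cancel₀ hu1 (by linear_combination hu3)⟩

/-- Thue's lemma. -/
theorem exists_small_eq_mul {p : ℕ} [Fact p.Prime] (k : ZMod p) :
    ∃ x y : ℤ, (x, y) ≠ (0, 0) ∧ x ^ 2 < p ∧ y ^ 2 < p ∧ (x : ZMod p) = k * y := by
  have hp : p.Prime := Fact.out
  set s := p.sqrt with hs
  have hlt : s * s < p := lt_of_le_of_ne (Nat.sqrt_le p) fun h => by
    rw [← h] at hp
    exact (Nat.prime_mul_iff.1 hp).elim (fun hq => hq.1.ne_one hq.2) fun hq => hq.1.ne_one hq.2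
  have hcard : #(univ : Finset (ZMod p)) < #(range (s + 1) ×ˢ range (s + 1)) := by
    rw [card_univ, ZMod.card, card_product, card_range]
    exact Nat.lt_succ_sqrt p
  obtain ⟨⟨a, b⟩, hab, ⟨c, d⟩, hcd, hne, heq⟩ :=
    exists_ne_map_eq_of_card_lt_of_maps_to hcard
      (f := fun t : ℕ × ℕ => (t.1 : ZMod p) - k * t.2) (fun _ _ => mem_univ _)
  simp only [mem_product, mem_range, ne_eq, Prod.mk.injEq] at hab hcd hne heq
  have bound : ∀ u v : ℕ, u < s + 1 → v < s + 1 → ((u : ℤ) - v) ^ 2 < p := by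
    intro u v hu hv
    have hlt' : (s : ℤ) * s < p := by exact_mod_cast hlt
    have : |(u : ℤ) - v| ≤ |(s : ℤ)| := by
      rw [Nat.abs_cast, abs_le]
      constructor <;> omega
    have := sq_le_sq.2 this
    nlinarith
  refine ⟨a - c, b - d, ?_, bound a c hab.1 hcd.1, bound b d hab.2 hcd.2, ?_⟩
  · simp only [ne_eq, Prod.mk.injEq]
    omega
  · push_cast
    linear_combination heq

theorem exists_eisNorm_eq_prime {p : ℕ} (hp : p.Prime) (h1 : p % 3 = 1) :
    ∃ β, eisNorm β = p := by
  have := Fact.mk hp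
  obtain ⟨k, hk⟩ := exists_sq_add_self_add_one_eq_zero (p := p) h1
  obtain ⟨x, y, hne, hx, hy, hxy⟩ := exists_small_eq_mul k
  obtain ⟨m, hm⟩ : (p : ℤ) ∣ x ^ 2 + x * y + y ^ 2 := by
    rw [← ZMod.intCast_zmod_eq_zero_iff_dvd]
    push_cast
    rw [hxy]
    linear_combination (y : ZMod p) ^ 2 * hk
  have hp0 : (0 : ℤ) < p := by exact_mod_cast hp.pos
  have hpos : 0 < x ^ 2 + x * y + y ^ 2 := by
    by_contra! hle
    have hy0 : y = 0 := by
      refine pow_eq_zero_iff two_ne_zero |>.1 (le_antisymm ?_ (sq_nonneg y))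
      nlinarith [sq_nonneg (2 * x + y)]
    have hx0 : x = 0 := by
      refine pow_eq_zero_iff two_ne_zero |>.1 (le_antisymm ?_ (sq_nonneg x))
      nlinarith [sq_nonneg (x + 2 * y)]
    exact hne (by rw [hx0, hy0])
  have hm0 : 0 < m := by
    rw [hm] at hpos
    exact pos_of_mul_pos_right hpos hp0.le
  have hm3 : m < 3 := by
    refine lt_of_mul_lt_mul_left ?_ hp0.le
    nlinarith [sq_nonneg (x - y)]
  obtain rfl | rfl : m = 1 ∨ m = 2 := by omega
  · exact ⟨(x, y), by simpa [eisNorm] using hm⟩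
  · exfalso
    have hpodd : p % 2 = 1 := hp.eq_two_or_odd.resolve_left (by rintro rfl; omega)
    rcases Int.even_or_odd' x with ⟨u, rfl | rfl⟩ <;>
      rcases Int.even_or_odd' y with ⟨v, rfl | rfl⟩
    · have : 2 * (u ^ 2 + u * v + v ^ 2) = p := by linarith
      omega
    · have : 2 * (2 * u ^ 2 + u * (2 * v + 1) + 2 * v ^ 2 + 2 * v) + 1 = p * 2 := by linarith
      omega
    · have : 2 * (2 * u ^ 2 + 2 * u + (2 * u + 1) * v + 2 * v ^ 2) + 1 = p * 2 := by linarith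
      omega
    · have : 2 * (2 * u ^ 2 + 2 * u + 2 * u * v + u + v + 2 * v ^ 2 + 2 * v + 1) + 1 = p * 2 := by
        linarith
      omega

theorem ncard_eisReps_split_mul {p : ℕ} (hp : p.Prime) (h1 : p % 3 = 1) (n : ℕ) :
    (eisReps (p * n)).ncard + (if p ∣ n then (eisReps (n / p)).ncard else 0) =
      2 * (eisReps n).ncard := by
  obtain ⟨⟨a, b⟩, hβ⟩ := exists_eisNorm_eq_prime hp h1
  have hβ' : eisNorm (a + b, -b) = p := by
    rw [← hβ]
    simp only [eisNorm]
    ring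
  have hab : a ^ 2 + a * b + b ^ 2 = p := hβ
  have hp0 : (p : ℤ) ≠ 0 := by exact_mod_cast hp.ne_zero
  have hpr : Prime (p : ℤ) := Nat.prime_iff_prime_int.1 hp
  have hp3 : 3 < p := by
    have := hp.two_le
    omega
  have hsmall : ∀ q : ℕ, 0 < q → q < p → ¬ (p : ℤ) ∣ q := by
    intro q h0 hq h
    exact absurd (Nat.le_of_dvd h0 (Int.natCast_dvd_natCast.1 h)) (by omega)
  have hb : ¬ (p : ℤ) ∣ b := by
    rintro ⟨c, rfl⟩
    obtain ⟨d, rfl⟩ : (p : ℤ) ∣ a :=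
      hpr.dvd_of_dvd_pow (n := 2) ⟨1 - a * c - p * c ^ 2, by linear_combination hab⟩
    exact hpr.not_dvd_one ⟨d ^ 2 + d * c + c ^ 2,
      mul_left_cancel₀ hp0 (by linear_combination -hab)⟩
  have hunion : eisReps (p * n) =
      eisMul (a, b) '' eisReps n ∪ eisMul (a + b, -b) '' eisReps n := by
    refine Set.Subset.antisymm ?_
      (Set.union_subset (image_eisMul_subset hβ rfl) (image_eisMul_subset hβ' rfl))
    rintro ⟨x, y⟩ hα
    have hα' : x ^ 2 + x * y + y ^ 2 = (p * n : ℕ) := hα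
    push_cast at hα'
    have hprod : (p : ℤ) ∣ (a * y - b * x) * ((a + b) * y + b * x) :=
      ⟨y ^ 2 - b ^ 2 * n, by linear_combination y ^ 2 * hab - b ^ 2 * hα'⟩
    rcases hpr.dvd_or_dvd hprod with h | h
    · refine Or.inl (mem_image_eisMul hp.pos hβ hα rfl ?_ h)
      obtain ⟨t, ht⟩ := h
      refine hpr.dvd_of_dvd_pow (n := 2)
        ⟨p * n - t * ((a + b) * x + b * y) - p * t ^ 2, ?_⟩
      linear_combination p * hα' + (x ^ 2 + x * y + y ^ 2) * hab -
        ((a + b) * x + b * y + a * y - b * x + p * t) * ht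
    · refine Or.inr (mem_image_eisMul hp.pos hβ' hα rfl ?_ ?_)
      · obtain ⟨t, ht⟩ := h
        refine hpr.dvd_of_dvd_pow (n := 2)
          ⟨p * n - t * (a * x - b * y) - p * t ^ 2, ?_⟩
        linear_combination p * hα' + (x ^ 2 + x * y + y ^ 2) * hab -
          (a * x - b * y + (a + b) * y + b * x + p * t) * ht
      · rwa [sub_eq_add_neg, neg_mul, neg_neg]
  have hinter : eisMul (a, b) '' eisReps n ∩ eisMul (a + b, -b) '' eisReps n =
      {α ∈ eisReps (p * n) | (p : ℤ) ∣ α.1 ∧ (p : ℤ) ∣ α.2} := by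
    ext ⟨x, y⟩
    constructor
    · rintro ⟨hα, hα'⟩
      have hmem := image_eisMul_subset hβ rfl hα
      obtain ⟨⟨c, d⟩, -, h⟩ := hα
      obtain ⟨⟨c', d'⟩, -, h'⟩ := hα'
      simp only [eisMul, Prod.mk.injEq] at h h'
      have e₁ : a * y - b * x = p * d := by
        linear_combination d * hab - a * h.2 + b * h.1
      have e₂ : (a + b) * y + b * x = p * d' := by
        linear_combination d' * hab - (a + b) * h'.2 - b * h'.1
      have hy : (p : ℤ) ∣ y := by
        have h₃ : (p : ℤ) ∣ (3 : ℕ) * (b ^ 2 * y) :=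
          ⟨4 * y - (2 * a + b) * (d + d'), by
            push_cast
            linear_combination 4 * y * hab - (2 * a + b) * (e₁ + e₂)⟩
        exact (hpr.dvd_or_dvd ((hpr.dvd_or_dvd h₃).resolve_left
          (hsmall 3 (by norm_num) hp3))).resolve_left fun h => hb (hpr.dvd_of_dvd_pow h)
      refine ⟨hmem, ?_, hy⟩
      have hbx : (p : ℤ) ∣ b * x := by
        rw [show b * x = a * y - p * d by linear_combination -e₁]
        exact dvd_sub (hy.mul_left a) (dvd_mul_right _ _)
      exact (hpr.dvd_or_dvd hbx).resolve_left hb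
    · rintro ⟨hα, hx, hy⟩
      exact ⟨mem_image_eisMul hp.pos hβ hα rfl (dvd_add (hx.mul_left _) (hy.mul_left _))
          (dvd_sub (hy.mul_left _) (hx.mul_left _)),
        mem_image_eisMul hp.pos hβ' hα rfl (dvd_add (hx.mul_left _) (hy.mul_left _))
          (dvd_sub (hy.mul_left _) (hx.mul_left _))⟩
  have hcard := Set.ncard_union_add_ncard_inter (eisMul (a, b) '' eisReps n)
    (eisMul (a + b, -b) '' eisReps n) ((finite_eisReps n).image _) ((finite_eisReps n).image _)
  simp only [← hunion, hinter, ncard_eisReps_dvd hp.pos, sq_dvd_mul_self_iff hp.pos,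
    mul_div_sq hp.pos] at hcard
  rw [ncard_image_eisMul (by rw [hβ]; exact hp0),
    ncard_image_eisMul (by rw [hβ']; exact hp0)] at hcard
  rw [hcard, two_mul]

theorem chiM3_mul (m n : ℕ) : chiM3 (m * n) = chiM3 m * chiM3 n := by
  have hm : m % 3 < 3 := Nat.mod_lt _ (by norm_num)
  have hn : n % 3 < 3 := Nat.mod_lt _ (by norm_num)
  simp only [chiM3, Nat.mul_mod m n]
  interval_cases m % 3 <;> interval_cases n % 3 <;> rfl

theorem sum_divisors_prime_mul {p n : ℕ} (hp : p.Prime) (hn : 0 < n) :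
    ∑ d ∈ (p * n).divisors, chiM3 d + chiM3 p * Sdiv chiM3 n p =
      (1 + chiM3 p) * ∑ d ∈ n.divisors, chiM3 d := by
  have hinj : Set.InjOn (fun d => p * d) (Set.univ : Set ℕ) :=
    fun _ _ _ _ h => Nat.eq_of_mul_eq_mul_left hp.pos h
  have hsum : ∀ s : Finset ℕ,
      ∑ d ∈ s.image (fun d => p * d), chiM3 d = chiM3 p * ∑ d ∈ s, chiM3 d := by
    intro s
    rw [sum_image (hinj.mono (Set.subset_univ _)), mul_sum]
    exact sum_congr rfl fun d _ => chiM3_mul p d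
  have hunion : (p * n).divisors = n.divisors ∪ n.divisors.image (fun d => p * d) := by
    ext d
    simp only [Nat.mem_divisors, mem_union, mem_image]
    constructor
    · rintro ⟨hd, -⟩
      by_cases hpd : p ∣ d
      · obtain ⟨e, rfl⟩ := hpd
        exact Or.inr ⟨e, ⟨(Nat.mul_dvd_mul_iff_left hp.pos).1 hd, hn.ne'⟩, rfl⟩
      · exact Or.inl ⟨(((Nat.Prime.coprime_iff_not_dvd hp).2 hpd).symm).dvd_of_dvd_mul_left hd,
          hn.ne'⟩
    · rintro (⟨hd, -⟩ | ⟨e, ⟨he, -⟩, rfl⟩)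
      · exact ⟨hd.mul_left p, (Nat.mul_pos hp.pos hn).ne'⟩
      · exact ⟨Nat.mul_dvd_mul_left p he, (Nat.mul_pos hp.pos hn).ne'⟩
  have hinter : ∑ d ∈ n.divisors ∩ n.divisors.image (fun d => p * d), chiM3 d =
      chiM3 p * Sdiv chiM3 n p := by
    unfold Sdiv
    split_ifs with h
    · obtain ⟨k, rfl⟩ := h
      rw [Nat.mul_div_cancel_left k hp.pos, ← hsum]
      congr 1
      ext d
      simp only [Nat.mem_divisors, mem_inter, mem_image]
      constructor
      · rintro ⟨⟨hd, -⟩, e, -, rfl⟩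
        exact ⟨e, ⟨(Nat.mul_dvd_mul_iff_left hp.pos).1 hd, (Nat.pos_of_mul_pos_left hn).ne'⟩, rfl⟩
      · rintro ⟨e, ⟨he, -⟩, rfl⟩
        exact ⟨⟨Nat.mul_dvd_mul_left p he, hn.ne'⟩, e, ⟨he.mul_left p, hn.ne'⟩, rfl⟩
    · rw [mul_zero]
      refine sum_eq_zero fun d hd => ?_
      simp only [Nat.mem_divisors, mem_inter, mem_image] at hd
      obtain ⟨⟨hd, -⟩, e, -, rfl⟩ := hd
      exact absurd (dvd_of_mul_right_dvd hd) h
  rw [← hinter, hunion, sum_union_inter, hsum]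
  ring

theorem ncard_eisReps_one : (eisReps 1).ncard = 6 := by
  have : eisReps 1 =
      (({(1, 0), (-1, 0), (0, 1), (0, -1), (1, -1), (-1, 1)} : Finset (ℤ × ℤ)) :
        Set (ℤ × ℤ)) := by
    ext ⟨x, y⟩
    simp only [eisReps, eisNorm, Set.mem_ofPred_eq, coe_insert, coe_singleton,
      Set.mem_insert_iff, Set.mem_singleton_iff, Prod.mk.injEq]
    constructor
    · intro h
      push_cast at h
      have hx₁ : x ≤ 1 := by nlinarith [sq_nonneg (x + 2 * y)]
      have hx₂ : -1 ≤ x := by nlinarith [sq_nonneg (x + 2 * y)]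
      have hy₁ : y ≤ 1 := by nlinarith [sq_nonneg (2 * x + y)]
      have hy₂ : -1 ≤ y := by nlinarith [sq_nonneg (2 * x + y)]
      interval_cases x <;> interval_cases y <;> simp_all
    · rintro (⟨rfl, rfl⟩ | ⟨rfl, rfl⟩ | ⟨rfl, rfl⟩ | ⟨rfl, rfl⟩ | ⟨rfl, rfl⟩ | ⟨rfl, rfl⟩) <;>
        norm_num
  rw [this, Set.ncard_coe_finset]
  rfl

/-- The number of representations of `n` by `x² + xy + y²`. -/
theorem ncard_eisReps (n : ℕ) (hn : 0 < n) :
    ((eisReps n).ncard : ℤ) = 6 * ∑ d ∈ n.divisors, chiM3 d := by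
  induction n using Nat.strong_induction_on with
  | _ n ih =>
    rcases eq_or_ne n 1 with rfl | hn1
    · rw [ncard_eisReps_one]
      simp [chiM3]
    obtain ⟨p, hp, m, rfl⟩ := Nat.exists_prime_and_dvd hn1
    have hm : 0 < m := Nat.pos_of_mul_pos_left hn
    have ihm := ih m (lt_mul_of_one_lt_left hm hp.one_lt) hm
    have hS := sum_divisors_prime_mul hp hm
    have ihd : ((if p ∣ m then (eisReps (m / p)).ncard else 0 : ℕ) : ℤ) = 6 * Sdiv chiM3 m p := by
      unfold Sdiv
      split_ifs with h
      · exact ih _ ((Nat.div_le_self m p).trans_lt (lt_mul_of_one_lt_left hm hp.one_lt))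
          (Nat.div_pos (Nat.le_of_dvd hm h) hp.pos)
      · simp
    have hmod : p % 3 = 0 ∨ p % 3 = 1 ∨ p % 3 = 2 := by omega
    rcases hmod with h | h | h
    · obtain rfl : 3 = p :=
        (Nat.prime_dvd_prime_iff_eq Nat.prime_three hp).1 (Nat.dvd_of_mod_eq_zero h)
      rw [ncard_eisReps_three_mul]
      simp only [chiM3, h] at hS ihm ⊢
      norm_num at hS
      rw [ihm, hS]
    · have hχ : chiM3 p = 1 := by simp [chiM3, h]
      have hR : ((eisReps (p * m)).ncard : ℤ) +
          ((if p ∣ m then (eisReps (m / p)).ncard else 0 : ℕ) : ℤ) =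
            2 * ((eisReps m).ncard : ℤ) := by
        exact_mod_cast ncard_eisReps_split_mul hp h m
      rw [hχ] at hS
      linear_combination hR - ihd + 2 * ihm - 6 * hS
    · have hχ : chiM3 p = -1 := by simp [chiM3, h]
      rw [hχ] at hS
      rw [ncard_eisReps_inert_mul hp h, ihd]
      linear_combination -6 * hS

/-- When `3 ∣ n`, the representations of `n` have coordinates both `1`, both `-1` or both `0`
modulo `3`. -/
theorem ncard_eisReps_eq_of_three_dvd {n : ℕ} (h3 : 3 ∣ n) :
    (eisReps n).ncard = 2 * {α ∈ eisReps n | α.1 % 3 = 1 ∧ α.2 % 3 = 1}.ncard +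
      if 9 ∣ n then (eisReps (n / 9)).ncard else 0 := by
  set A := {α ∈ eisReps n | α.1 % 3 = 1 ∧ α.2 % 3 = 1} with hA
  set B := {α ∈ eisReps n | α.1 % 3 = 2 ∧ α.2 % 3 = 2} with hB
  set C := {α ∈ eisReps n | ((3 : ℕ) : ℤ) ∣ α.1 ∧ ((3 : ℕ) : ℤ) ∣ α.2} with hC
  have hAf : A.Finite := (finite_eisReps n).subset (Set.sep_subset _ _)
  have hBf : B.Finite := (finite_eisReps n).subset (Set.sep_subset _ _)
  have hCf : C.Finite := (finite_eisReps n).subset (Set.sep_subset _ _)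
  have hBA : B.ncard = A.ncard := by
    rw [← Set.ncard_image_of_injective A neg_injective]
    congr 1
    ext ⟨x, y⟩
    simp only [hA, hB, eisReps, eisNorm, Set.image_neg_eq_neg, Set.mem_neg, Set.mem_ofPred_eq,
      Prod.fst_neg, Prod.snd_neg, neg_sq, neg_mul_neg]
    refine and_congr_right fun _ => ?_
    omega
  have hunion : eisReps n = A ∪ B ∪ C := by
    refine Set.Subset.antisymm ?_ (Set.union_subset (Set.union_subset (Set.sep_subset _ _)
      (Set.sep_subset _ _)) (Set.sep_subset _ _))
    rintro ⟨x, y⟩ hα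
    have hα' : x ^ 2 + x * y + y ^ 2 = n := hα
    obtain ⟨k, rfl⟩ := h3
    push_cast at hα'
    have h : (3 : ℤ) ∣ x - y :=
      Int.prime_three.dvd_of_dvd_pow (n := 2) ⟨k - x * y, by linear_combination hα'⟩
    simp only [hA, hB, hC, Set.mem_union, Set.mem_ofPred_eq, hα, true_and]
    omega
  have hCc : C.ncard = if 9 ∣ n then (eisReps (n / 9)).ncard else 0 :=
    ncard_eisReps_dvd (p := 3) (n := n) (by norm_num)
  have hdAB : Disjoint A B := Set.disjoint_left.2 fun α h h' => by
    have := h.2.1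
    have := h'.2.1
    omega
  have hdABC : Disjoint (A ∪ B) C := Set.disjoint_left.2 fun α h h' => by
    have := h'.2.1
    rcases h with h | h <;> have := h.2.1 <;> omega
  rw [← hCc, hunion, Set.ncard_union_eq hdABC (hAf.union hBf) hCf,
    Set.ncard_union_eq hdAB hAf hBf, hBA, two_mul]

theorem rep_x2_xy_y2_x1mod3_y1mod3 (n : ℕ) (hn : 0 < n) :
    ({p : ℤ × ℤ | p.1 ^ 2 + p.1 * p.2 + p.2 ^ 2 = (n : ℤ) ∧ p.1 % 3 = 1 ∧ p.2 % 3 = 1}.ncard : ℤ) =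
      3 * Sdiv chiM3 n 3 - 3 * Sdiv chiM3 n 9 := by
  change ({α ∈ eisReps n | α.1 % 3 = 1 ∧ α.2 % 3 = 1}.ncard : ℤ) = _
  by_cases h3 : 3 ∣ n
  · have key : ((eisReps n).ncard : ℤ) =
        2 * ({α ∈ eisReps n | α.1 % 3 = 1 ∧ α.2 % 3 = 1}.ncard : ℤ) +
          ((if 9 ∣ n then (eisReps (n / 9)).ncard else 0 : ℕ) : ℤ) := by
      exact_mod_cast ncard_eisReps_eq_of_three_dvd h3
    have h9 : ((if 9 ∣ n then (eisReps (n / 9)).ncard else 0 : ℕ) : ℤ) = 6 * Sdiv chiM3 n 9 := by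
      unfold Sdiv
      split_ifs with h
      · exact ncard_eisReps _ (Nat.div_pos (Nat.le_of_dvd hn h) (by norm_num))
      · simp
    have hS : ((eisReps n).ncard : ℤ) = 6 * Sdiv chiM3 n 3 := by
      rw [Sdiv, if_pos h3]
      obtain ⟨m, rfl⟩ := h3
      rw [Nat.mul_div_cancel_left m (by norm_num), ncard_eisReps_three_mul,
        ncard_eisReps m (Nat.pos_of_mul_pos_left hn)]
    linarith
  · have h9 : ¬ 9 ∣ n := fun h => h3 (dvd_trans (by norm_num) h)
    have hempty : {α ∈ eisReps n | α.1 % 3 = 1 ∧ α.2 % 3 = 1} = ∅ := by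
      rw [Set.eq_empty_iff_forall_notMem]
      rintro ⟨x, y⟩ ⟨hα, hx, hy⟩
      have hα' : x ^ 2 + x * y + y ^ 2 = n := hα
      simp only at hx hy
      obtain ⟨u, rfl⟩ : ∃ u, x = 3 * u + 1 := ⟨x / 3, by omega⟩
      obtain ⟨v, rfl⟩ : ∃ v, y = 3 * v + 1 := ⟨y / 3, by omega⟩
      refine h3 (Int.natCast_dvd_natCast.1
        ⟨3 * u ^ 2 + 3 * u + 3 * u * v + 3 * v ^ 2 + 3 * v + 1, ?_⟩)
      push_cast
      linear_combination -hα'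
    rw [hempty, Sdiv, Sdiv, if_neg h3, if_neg h9]
    simp
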